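/- arXiv:2312.17006 — 5 statements merged into one kernel-verified Lean document; each statement's English description precedes it below -/
import Mathlib

section
/- Let a, b, c, d be nonnegative real numbers and let σ̄, ψ be real numbers with 0 < σ̄ < 1 and 0 < ψ < 1. Define σ := 1 - (1-ψ)(1-σ̄). Then σ̄·a + b + c + d ≤ max{ σ·a , 3b/((1-σ̄)·ψ) , 3c/((1-σ̄)·ψ) , 3d/((1-σ̄)·ψ) }. -/
/-!
Put `k = (1 - σb) * ψ`, so that `σ = σb + k`, and let `s` be the sum of the perturbations. If
`s ≤ k * a`, the perturbations are absorbed by `σ * a`. Otherwise `a ≤ s / k`, so that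
`σb * a + s ≤ (σb + k) * (s / k) ≤ s / k`. Finally, a sum of `n` terms is at most `n` times its
largest term.
-/

theorem sum_le_sup'_card_nsmul {ι M : Type*} [AddCommMonoid M] [LinearOrder M]
    [IsOrderedAddMonoid M] {s : Finset ι} (hs : s.Nonempty) (f : ι → M) :
    ∑ i ∈ s, f i ≤ s.sup' hs fun i => s.card • f i := by
  obtain ⟨i, hi, hmax⟩ := s.exists_max_image f hs
  exact (Finset.le_sup'_iff hs).2 ⟨i, hi, s.sum_le_card_nsmul f (f i) hmax⟩

section LinearOrderedField

variable {K : Type*} [Field K] [LinearOrder K] [IsStrictOrderedRing K]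

theorem sum_div_le_sup'_card_mul_div {ι : Type*} {s : Finset ι} (hs : s.Nonempty) (f : ι → K)
    (k : K) : (∑ i ∈ s, f i) / k ≤ s.sup' hs fun i => s.card * f i / k := by
  simpa only [Finset.sum_div, nsmul_eq_mul, mul_div_assoc] using
    sum_le_sup'_card_nsmul hs fun i => f i / k

theorem mul_add_le_max_add_mul_div {r k a s : K} (hr : 0 ≤ r) (hk : 0 < k) (hrk : r + k ≤ 1)
    (ha : 0 ≤ a) : r * a + s ≤ max ((r + k) * a) (s / k) := by
  rcases le_total s (k * a) with hs | hs
  · refine le_max_of_le_left ?_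
    calc r * a + s ≤ r * a + k * a := by gcongr
      _ = (r + k) * a := (add_mul r k a).symm
  · have has : a ≤ s / k := (le_div_iff₀' hk).2 hs
    refine le_max_of_le_right ?_
    calc r * a + s ≤ r * (s / k) + s := by gcongr
      _ = (r + k) * (s / k) := by rw [add_mul, mul_div_cancel₀ s hk.ne']
      _ ≤ s / k := mul_le_of_le_one_left (ha.trans has) hrk

theorem stmt1_general {ι : Type*} {s : Finset ι} (hs : s.Nonempty) (b : ι → K) {a σb ψ σ : K}
    (ha : 0 ≤ a) (hσb : 0 ≤ σb ∧ σb < 1) (hψ : 0 < ψ ∧ ψ ≤ 1)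
    (hσ : σ = 1 - (1 - ψ) * (1 - σb)) :
    σb * a + ∑ i ∈ s, b i ≤
      max (σ * a) (s.sup' hs fun i => s.card * b i / ((1 - σb) * ψ)) := by
  have hσ_eq : σ = σb + (1 - σb) * ψ := by rw [hσ]; ring
  have hk : 0 < (1 - σb) * ψ := mul_pos (sub_pos.2 hσb.2) hψ.1
  have hσ_le : σb + (1 - σb) * ψ ≤ 1 := by
    linarith [mul_le_of_le_one_right (sub_nonneg.2 hσb.2.le) hψ.2]
  rw [hσ_eq]
  exact (mul_add_le_max_add_mul_div hσb.1 hk hσ_le ha).trans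
    (max_le_max_left _ (sum_div_le_sup'_card_mul_div hs b _))

end LinearOrderedField

/-- Four-term scalar inequality underlying Lemma 1: a sum-form simulation-function
estimate with contraction factor `σ̄` implies a max-form estimate where each
perturbation term is rescaled by `3/((1-σ̄)ψ)`. -/
theorem stmt1 (a b c d σb ψ σ : ℝ)
    (ha : 0 ≤ a) (hb : 0 ≤ b) (hc : 0 ≤ c) (hd : 0 ≤ d)
    (hσb : 0 < σb ∧ σb < 1) (hψ : 0 < ψ ∧ ψ < 1)
    (hσ : σ = 1 - (1 - ψ) * (1 - σb)) :
    σb * a + b + c + d ≤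
      max (σ * a)
        (max (3 * b / ((1 - σb) * ψ)) (max (3 * c / ((1 - σb) * ψ)) (3 * d / ((1 - σb) * ψ)))) := by
  simpa [Fin.univ_succ, Fin.sum_univ_three, add_assoc] using
    stmt1_general Finset.univ_nonempty ![b, c, d] ha ⟨hσb.1.le, hσb.2⟩ ⟨hψ.1, hψ.2.le⟩ hσ
end

section
/- Let N ≥ 1 and σ̃ ∈ (0,1). For each i ∈ {1,…,N}, let ψ_i : ℝ≥0 → ℝ≥0 be a class-K∞ function with inverse ψ_i⁻¹, and for each pair (i,j) let γ_{ij} : ℝ≥0 → ℝ≥0 be a nondecreasing function satisfying the scaled small-gain condition γ_{ij}(ψ_j(r)) ≤ ψ_i(σ̃·r) for all r ≥ 0. Let s_i ≥ 0, s_i⁺ ≥ 0 and c_i ≥ 0 be real numbers such that for every i, s_i⁺ ≤ max{ max_{1≤j≤N} γ_{ij}(s_j) , c_i }. Then max_{1≤i≤N} ψ_i⁻¹(s_i⁺) ≤ max{ σ̃ · max_{1≤i≤N} ψ_i⁻¹(s_i) , max_{1≤i≤N} ψ_i⁻¹(c_i) }. -/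
open Filter NNReal

section SmallGain

variable {ι α β δ : Type*}

lemma galoisConnection_of_strictMono_of_rightInverse [LinearOrder α] [Preorder β] {ψ : α → β}
    {ψinv : β → α} (hψ : StrictMono ψ) (hinv : Function.RightInverse ψinv ψ) :
    GaloisConnection ψinv ψ :=
  (hψ.orderIsoOfRightInverse ψ ψinv hinv).symm.to_galoisConnection

lemma gain_le_of_small_gain [Preorder α] [Preorder β] [Preorder δ] {ψ : α → β} {ψinv : β → α}
    {γ : β → δ} {φ : α → δ} (hgc : GaloisConnection ψinv ψ) (hγ : Monotone γ)
    (hsg : ∀ r, γ (ψ r) ≤ φ r) (s : β) : γ s ≤ φ (ψinv s) :=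
  (hγ (hgc.le_u_l s)).trans (hsg (ψinv s))

variable [Nonempty ι] [ConditionallyCompleteLattice α] {ψ : ι → α → β} {ψinv : ι → β → α}
  {s : ι → β}

lemma iSup_gain_le_of_small_gain [Preorder β] [ConditionallyCompleteLattice δ]
    {γ : ι → β → δ} {φ : α → δ} (hgc : ∀ j, GaloisConnection (ψinv j) (ψ j))
    (hγ : ∀ j, Monotone (γ j)) (hφ : Monotone φ) (hsg : ∀ j r, γ j (ψ j r) ≤ φ r)
    (hs : BddAbove (Set.range fun j => ψinv j (s j))) :
    (⨆ j, γ j (s j)) ≤ φ (⨆ j, ψinv j (s j)) :=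
  ciSup_le fun j => calc
    γ j (s j) ≤ φ (ψinv j (s j)) := gain_le_of_small_gain (hgc j) (hγ j) (hsg j) (s j)
    _ ≤ φ (⨆ j, ψinv j (s j)) := hφ (le_ciSup hs j)

theorem stmt7_general [ConditionallyCompleteLattice β] {σ : α → α} {γ : ι → ι → β → β}
    {sp c : ι → β} (hgc : ∀ i, GaloisConnection (ψinv i) (ψ i)) (hσ : Monotone σ)
    (hγ : ∀ i j, Monotone (γ i j)) (hsg : ∀ i j r, γ i j (ψ j r) ≤ ψ i (σ r))
    (hs : BddAbove (Set.range fun i => ψinv i (s i)))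
    (hc : BddAbove (Set.range fun i => ψinv i (c i)))
    (hstep : ∀ i, sp i ≤ (⨆ j, γ i j (s j)) ⊔ c i) :
    (⨆ i, ψinv i (sp i)) ≤ σ (⨆ i, ψinv i (s i)) ⊔ ⨆ i, ψinv i (c i) := by
  refine ciSup_le fun i => (hgc i).l_le ?_
  have hψ : Monotone (ψ i) := (hgc i).monotone_u
  have hgain : (⨆ j, γ i j (s j)) ≤ ψ i (σ (⨆ j, ψinv j (s j))) :=
    iSup_gain_le_of_small_gain hgc (hγ i) (hψ.comp hσ) (hsg i) hs
  have hinput : c i ≤ ψ i (⨆ k, ψinv k (c k)) := (hgc i).le_u (le_ciSup hc i)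
  calc
    sp i ≤ (⨆ j, γ i j (s j)) ⊔ c i := hstep i
    _ ≤ ψ i (σ (⨆ j, ψinv j (s j))) ⊔ ψ i (⨆ k, ψinv k (c k)) := sup_le_sup hgain hinput
    _ ≤ ψ i (σ (⨆ j, ψinv j (s j)) ⊔ ⨆ k, ψinv k (c k)) := hψ.le_map_sup _ _

end SmallGain

/-- Core decay step of Theorem 1: under the scaled small-gain condition
`γ_{ij}(ψ_j(r)) ≤ ψ_i(σ̃·r)`, a max-form local estimate on each `s_i⁺` implies a
max-form contraction for `max_i ψ_i⁻¹(s_i⁺)`. -/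
theorem stmt7 (N : ℕ) (hN : 1 ≤ N) (σt : ℝ≥0) (hσt : 0 < σt ∧ σt < 1)
    (ψ ψinv : Fin N → ℝ≥0 → ℝ≥0)
    (hψ_cont : ∀ i, Continuous (ψ i)) (hψ_mono : ∀ i, StrictMono (ψ i))
    (hψ_zero : ∀ i, ψ i 0 = 0) (hψ_top : ∀ i, Tendsto (ψ i) atTop atTop)
    (hψinv_left : ∀ i, Function.LeftInverse (ψinv i) (ψ i))
    (hψinv_right : ∀ i, Function.RightInverse (ψinv i) (ψ i))
    (γ : Fin N → Fin N → ℝ≥0 → ℝ≥0)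
    (hγ_mono : ∀ i j, Monotone (γ i j))
    (hsg : ∀ i j r, γ i j (ψ j r) ≤ ψ i (σt * r))
    (s sp c : Fin N → ℝ≥0)
    (hstep : ∀ i, sp i ≤ max (⨆ j, γ i j (s j)) (c i)) :
    (⨆ i, ψinv i (sp i)) ≤ max (σt * ⨆ i, ψinv i (s i)) (⨆ i, ψinv i (c i)) := by
  have : Nonempty (Fin N) := Fin.pos_iff_nonempty.mp hN
  exact stmt7_general
    (fun i => galoisConnection_of_strictMono_of_rightInverse (hψ_mono i) (hψinv_right i))
    (fun _ _ h => by gcongr) hγ_mono hsg (Set.finite_range _).bddAbove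
    (Set.finite_range _).bddAbove hstep
end

section
/- Let N ≥ 1. For each i ∈ {1,…,N} let X_i, X̂_i, W_i, Ŵ_i, U_i, Û_i be types; let F_i : X_i × W_i × U_i → Set X_i and F̂_i : X̂_i × Ŵ_i × Û_i → Set X̂_i be set-valued transition maps; for each pair (i,j) let H_{ij} : X_i → ℝ^{p_{ij}} and Ĥ_{ij} : X̂_i → ℝ^{p_{ij}} be output maps into ℝ^{p_{ij}} with the sup norm. The internal input of subsystem i is the tuple ω_i = (ω_{ij})_{j≠i} with ω_{ij} ∈ ℝ^{p_{ji}}, with norm ‖ω_i‖ = max_{j≠i} ‖ω_{ij}‖; interconnection is exact: in the interconnected system T, from state x = (x_1,…,x_N) each subsystem receives ω_{ij} = H_{ji}(x_j), and in T̂, from x̂ = (x̂_1,…,x̂_N), ω̂_{ij} = Ĥ_{ji}(x̂_j). Suppose: (a) for each i there are a class-K∞ function α_i, a constant σ_i ∈ (0,1), a nondecreasing function ρ_{ω_i} ≥ 0 with ρ_{ω_i}(0)=0, a nondecreasing function ρ_{u_i} ≥ 0, a constant ε_i ≥ 0, and a nonnegative function S_i : X_i × X̂_i → ℝ such that α_i(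 max_j ‖H_{ij}(x_i) − Ĥ_{ij}(x̂_i)‖ ) ≤ S_i(x_i, x̂_i) for all x_i, x̂_i, and for all x_i, x̂_i and all û_i ∈ Û_i there exists u_i ∈ U_i such that for all internal inputs ω_i, ω̂_i and every x_i⁺ ∈ F_i(x_i, ω_i, u_i) there exists x̂_i⁺ ∈ F̂_i(x̂_i, ω̂_i, û_i) with S_i(x_i⁺, x̂_i⁺) ≤ max{ σ_i·S_i(x_i,x̂_i) , ρ_{ω_i}(‖ω_i − ω̂_i‖) , ρ_{u_i}(‖û_i‖) , ε_i }; (b) defining γ_{ii}(r) := σ_i·r and γ_{ij} := ρ_{ω_i}∘α_j⁻¹ for i ≠ j, there exist class-K∞ functions ψ_i and a constant σ̃ ∈ (0,1) such that ψ_i⁻¹(γ_{ij}(ψ_j(r))) ≤ σ̃·r for all i, j and all r ≥ 0. Then the function S̃(x, x̂) := max_{1≤i≤N} ψ_i⁻¹( S_i(x_i, x̂_i) ) is an alternating simulation function from the interconnection T̂ = I(T̂_1,…,T̂_N) to T = I(T_1,…,T_N): (1) α̃( max_i ‖H_{ii}(x_i) − Ĥ_{ii}(x̂_i)‖ ) ≤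 S̃(x, x̂) for all x, x̂, where α̃(r) := min_j ψ_j⁻¹(α_j(r)); and (2) for all x, x̂ and all û = (û_1,…,û_N) there exists u = (u_1,…,u_N) such that for every x⁺ with x_i⁺ ∈ F_i(x_i, (H_{ji}(x_j))_{j≠i}, u_i) for all i, there exists x̂⁺ with x̂_i⁺ ∈ F̂_i(x̂_i, (Ĥ_{ji}(x̂_j))_{j≠i}, û_i) for all i, satisfying S̃(x⁺, x̂⁺) ≤ max{ σ̃·S̃(x, x̂) , max_i ψ_i⁻¹(ρ_{u_i}(‖û_i‖)) , max_i ψ_i⁻¹(ε_i) }. -/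
open Filter NNReal

/-!
`S̃` is the least level `c` at which the tuple `(S_i)` lies below the path `c ↦ (ψ_i c)`. The
small-gain condition says that each gain `γ_{ij}` maps the `j`-th coordinate of the path at level
`c` below its `i`-th coordinate at level `κ c`, where `κ c = σ̃ c` in the theorem. Internal inputs
differ only by output mismatches of the other subsystems, and these are bounded by `α_j⁻¹ (S_j)`, so
one step takes every `S_i` below `ψ_i (κ S̃)`, up to the external terms.
-/

theorem ciInf_apply_ciSup_le {ι A B : Type*} [Finite ι] [Nonempty ι]
    [ConditionallyCompleteLinearOrder A] [ConditionallyCompleteLattice B]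
    (f : ι → A → B) (d : ι → A) : ⨅ j, f j (⨆ i, d i) ≤ ⨆ i, f i (d i) := by
  obtain ⟨i, hi⟩ := exists_eq_ciSup_of_finite (f := d)
  calc ⨅ j, f j (⨆ i, d i) ≤ f i (⨆ i, d i) := Finite.ciInf_le _ i
    _ = f i (d i) := by rw [hi]
    _ ≤ ⨆ i, f i (d i) := Finite.le_ciSup (fun i => f i (d i)) i

theorem pi_nnnorm_induction {ι : Type*} [Fintype ι] {E : ι → Type*}
    [∀ i, SeminormedAddGroup (E i)] {v : ∀ i, E i} {P : ℝ≥0 → Prop}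
    (zero : P 0) (component : ∀ i, P ‖v i‖₊) : P ‖v‖₊ := by
  rw [Pi.nnnorm_def]
  exact Finset.sup_induction zero (fun _ ha _ hb => max_rec' P ha hb) fun i _ => component i

section ScaledMax

variable {ι L M : Type*} [ConditionallyCompleteLinearOrderBot L]

/-- The scaled maximum `max_i ψ_i⁻¹ (s_i)` of a tuple, from which `S̃` is formed. Class `K∞`
functions are encoded as order automorphisms of `ℝ≥0`, so that the inverse is `(ψ i).symm`. -/
def scaledMax [LE M] (ψ : ι → L ≃o M) (s : ι → M) : L :=
  ⨆ i, (ψ i).symm (s i)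

variable [Finite ι]

theorem scaledMax_le_iff [Preorder M] {ψ : ι → L ≃o M} {s : ι → M} {c : L} :
    scaledMax ψ s ≤ c ↔ ∀ i, s i ≤ ψ i c := by
  simp only [scaledMax, ciSup_le_iff' (Set.finite_range _).bddAbove, OrderIso.symm_apply_le]

theorem le_apply_scaledMax [Preorder M] (ψ : ι → L ≃o M) (s : ι → M) (i : ι) :
    s i ≤ ψ i (scaledMax ψ s) :=
  scaledMax_le_iff.1 le_rfl i

theorem scaledMax_sup [SemilatticeSup M] (ψ : ι → L ≃o M) (s t : ι → M) :
    scaledMax ψ (s ⊔ t) = scaledMax ψ s ⊔ scaledMax ψ t :=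
  eq_of_forall_ge_iff fun c => by
    simp only [scaledMax_le_iff, Pi.sup_apply, sup_le_iff, forall_and]

theorem gain_le_apply_scaledMax [Preorder M] {ψ : ι → L ≃o M} {γ : M → M} {κ : L → L} {i j : ι}
    (hγ : Monotone γ) (hsg : ∀ r, (ψ i).symm (γ (ψ j r)) ≤ κ r) (s : ι → M) :
    γ (s j) ≤ ψ i (κ (scaledMax ψ s)) :=
  calc γ (s j) ≤ γ (ψ j (scaledMax ψ s)) := hγ (le_apply_scaledMax ψ s j)
    _ ≤ ψ i (κ (scaledMax ψ s)) := (ψ i).symm_apply_le.1 (hsg _)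

end ScaledMax

section SmallGain

variable {ι : Type*} [DecidableEq ι]

/-- The gains of the small-gain condition: `γ_{ii} = σ_i · id`, and `γ_{ij} = ρ_i ∘ α_j⁻¹` for
`i ≠ j`. -/
def gain (σ : ι → ℝ≥0) (ρ : ι → ℝ≥0 → ℝ≥0) (α : ι → ℝ≥0 ≃o ℝ≥0) (i j : ι) (r : ℝ≥0) : ℝ≥0 :=
  if i = j then σ i * r else ρ i ((α j).symm r)

variable {σ : ι → ℝ≥0} {ρ : ι → ℝ≥0 → ℝ≥0} {α ψ : ι → ℝ≥0 ≃o ℝ≥0} {κ : ℝ≥0 → ℝ≥0}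

theorem gain_self (i : ι) (r : ℝ≥0) : gain σ ρ α i i r = σ i * r :=
  if_pos rfl

theorem gain_of_ne {i j : ι} (hij : i ≠ j) (r : ℝ≥0) :
    gain σ ρ α i j r = ρ i ((α j).symm r) :=
  if_neg hij

theorem gain_monotone {i : ι} (hρ : Monotone (ρ i)) (j : ι) : Monotone (gain σ ρ α i j) := by
  intro r t hrt
  obtain rfl | hij := eq_or_ne i j
  · simpa only [gain_self] using mul_le_mul_right hrt (σ i)
  · simpa only [gain_of_ne hij] using hρ ((α j).symm.monotone hrt)

variable [Fintype ι]

theorem internal_gain_le_apply_scaledMax {i : ι} {E : {j // j ≠ i} → Type*}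
    [∀ j, SeminormedAddGroup (E j)]
    (hρ : Monotone (ρ i)) (hρ_zero : ρ i 0 = 0)
    (hsg : ∀ j r, (ψ i).symm (gain σ ρ α i j (ψ j r)) ≤ κ r)
    {s : ι → ℝ≥0} {v : ∀ j, E j} (hv : ∀ j : {j // j ≠ i}, α j ‖v j‖₊ ≤ s j) :
    ρ i ‖v‖₊ ≤ ψ i (κ (scaledMax ψ s)) := by
  refine pi_nnnorm_induction (P := fun r => ρ i r ≤ ψ i (κ (scaledMax ψ s)))
    (hρ_zero.trans_le zero_le) fun j => ?_
  calc ρ i ‖v j‖₊ ≤ ρ i ((α j).symm (s j)) := hρ ((α j).le_symm_apply.2 (hv j))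
    _ = gain σ ρ α i j (s j) := (gain_of_ne j.2.symm _).symm
    _ ≤ ψ i (κ (scaledMax ψ s)) := gain_le_apply_scaledMax (gain_monotone hρ j) (hsg j) s

theorem scaledMax_le_of_small_gain {E : ι → ι → Type*} [∀ i j, SeminormedAddGroup (E i j)]
    (hρ : ∀ i, Monotone (ρ i)) (hρ_zero : ∀ i, ρ i 0 = 0)
    (hsg : ∀ i j r, (ψ i).symm (gain σ ρ α i j (ψ j r)) ≤ κ r)
    {s s' b : ι → ℝ≥0} {v : ∀ i, ∀ j : {j // j ≠ i}, E j i}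
    (hv : ∀ i (j : {j // j ≠ i}), α j ‖v i j‖₊ ≤ s j)
    (hs' : ∀ i, s' i ≤ max (max (σ i * s i) (ρ i ‖v i‖₊)) (b i)) :
    scaledMax ψ s' ≤ max (κ (scaledMax ψ s)) (scaledMax ψ b) := by
  refine scaledMax_le_iff.2 fun i => (hs' i).trans ?_
  have own_gain : σ i * s i ≤ ψ i (κ (scaledMax ψ s)) :=
    (gain_self i (s i)).symm.trans_le <|
      gain_le_apply_scaledMax (gain_monotone (hρ i) i) (hsg i i) s
  have internal_gain : ρ i ‖v i‖₊ ≤ ψ i (κ (scaledMax ψ s)) :=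
    internal_gain_le_apply_scaledMax (hρ i) (hρ_zero i) (hsg i) (hv i)
  rw [(ψ i).monotone.map_max]
  exact max_le_max (max_le own_gain internal_gain) (le_apply_scaledMax ψ b i)

end SmallGain

section Interconnection

variable {ι : Type*} {X U : ι → Type*} {E : ι → ι → Type*}

/-- The internal input `ω_{ij} = H_{ji}(x_j)`, `j ≠ i`, that subsystem `i` receives in the exact
interconnection at the joint state `x`. -/
def internalInput (H : ∀ i j, X i → E i j) (x : ∀ i, X i) (i : ι) (j : {j // j ≠ i}) : E j i :=
  H j i (x j)

/-- The transition map of the interconnection `I(T_1,…,T_N)` of subsystems with transition maps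
`F i` and output maps `H i j`. -/
def interconnection (F : ∀ i, X i → (∀ j : {j // j ≠ i}, E j i) → U i → Set (X i))
    (H : ∀ i j, X i → E i j) (x : ∀ i, X i) (u : ∀ i, U i) : Set (∀ i, X i) :=
  {x' | ∀ i, x' i ∈ F i (x i) (internalInput H x i) (u i)}

end Interconnection

theorem stmt8_general {ι : Type*} [Fintype ι] [DecidableEq ι] [Nonempty ι]
    {X Xh U Uh : ι → Type*} [∀ i, NNNorm (Uh i)]
    {E : ι → ι → Type*} [∀ i j, SeminormedAddGroup (E i j)]
    (H : ∀ i j, X i → E i j) (Hh : ∀ i j, Xh i → E i j)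
    (F : ∀ i, X i → (∀ j : {j // j ≠ i}, E j i) → U i → Set (X i))
    (Fh : ∀ i, Xh i → (∀ j : {j // j ≠ i}, E j i) → Uh i → Set (Xh i))
    (S : ∀ i, X i → Xh i → ℝ≥0)
    (α ψ : ι → ℝ≥0 ≃o ℝ≥0) (σ : ι → ℝ≥0) (ρω ρu : ι → ℝ≥0 → ℝ≥0) (ε : ι → ℝ≥0)
    (κ : ℝ≥0 → ℝ≥0)
    (hρω_mono : ∀ i, Monotone (ρω i)) (hρω_zero : ∀ i, ρω i 0 = 0)
    (hS1 : ∀ i x xh, α i (⨆ j, ‖H i j x - Hh i j xh‖₊) ≤ S i x xh)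
    (hS2 : ∀ i x xh (uh : Uh i), ∃ u, ∀ ω ωh, ∀ x' ∈ F i x ω u, ∃ xh' ∈ Fh i xh ωh uh,
      S i x' xh' ≤ max (max (σ i * S i x xh) (ρω i ‖ω - ωh‖₊)) (max (ρu i ‖uh‖₊) (ε i)))
    (hsg : ∀ i j r, (ψ i).symm (gain σ ρω α i j (ψ j r)) ≤ κ r) :
    (∀ (x : ∀ i, X i) (xh : ∀ i, Xh i),
      ⨅ j, (ψ j).symm (α j (⨆ i, ‖H i i (x i) - Hh i i (xh i)‖₊))
        ≤ scaledMax ψ fun i => S i (x i) (xh i)) ∧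
    ∀ (x : ∀ i, X i) (xh : ∀ i, Xh i) (uh : ∀ i, Uh i), ∃ u,
      ∀ x' ∈ interconnection F H x u, ∃ xh' ∈ interconnection Fh Hh xh uh,
        scaledMax ψ (fun i => S i (x' i) (xh' i)) ≤
          max (κ (scaledMax ψ fun i => S i (x i) (xh i)))
            (max (scaledMax ψ fun i => ρu i ‖uh i‖₊) (scaledMax ψ ε)) := by
  have output_le i j x xh : α i ‖H i j x - Hh i j xh‖₊ ≤ S i x xh :=
    ((α i).monotone (Finite.le_ciSup (fun j => ‖H i j x - Hh i j xh‖₊) j)).trans (hS1 i x xh)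
  refine ⟨fun x xh => ?_, fun x xh uh => ?_⟩
  · exact (ciInf_apply_ciSup_le (fun j r => (ψ j).symm (α j r)) _).trans <|
      Finite.ciSup_mono fun i => (ψ i).symm.monotone (output_le i i (x i) (xh i))
  · choose u hu using fun i => hS2 i (x i) (xh i) (uh i)
    refine ⟨u, fun x' hx' => ?_⟩
    choose xh' hxh' hle using fun i =>
      hu i (internalInput H x i) (internalInput Hh xh i) (x' i) (hx' i)
    refine ⟨xh', hxh', ?_⟩
    rw [← scaledMax_sup]
    exact scaledMax_le_of_small_gain hρω_mono hρω_zero hsg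
      (fun i j => output_le j i (x j) (xh j)) hle

/-- Theorem 1 of the paper: compositional construction of an alternating simulation
function.  Subsystem `i` has state types `X i`, `Xh i`, external-input types `U i`,
`Uh i` (with a norm), and output maps `H i j : X i → ℝ^{p i j}` (sup norm); its
internal input is the tuple `(ω_{ij})_{j ≠ i}` with `ω_{ij} ∈ ℝ^{p j i}`, with the
sup norm over components.  Under the local max-form alternating simulation estimates
(hS1), (hS2) and the scaled small-gain condition (hsg), the function
`S̃(x,x̂) = max_i ψ_i⁻¹(S_i(x_i,x̂_i))` satisfies both conditions of an alternating
simulation function from the interconnection of the abstractions to the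
interconnection of the concrete subsystems. -/
theorem stmt8
    (N : ℕ) (hN : 1 ≤ N)
    (p : Fin N → Fin N → ℕ)
    (X Xh U Uh : Fin N → Type*)
    [∀ i, NNNorm (Uh i)]
    (H : (i : Fin N) → (j : Fin N) → X i → (Fin (p i j) → ℝ))
    (Hh : (i : Fin N) → (j : Fin N) → Xh i → (Fin (p i j) → ℝ))
    (F : (i : Fin N) → X i → ((j : {j : Fin N // j ≠ i}) → (Fin (p j.1 i) → ℝ)) →
      U i → Set (X i))
    (Fh : (i : Fin N) → Xh i → ((j : {j : Fin N // j ≠ i}) → (Fin (p j.1 i) → ℝ)) →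
      Uh i → Set (Xh i))
    (S : (i : Fin N) → X i → Xh i → ℝ≥0)
    (α αinv : Fin N → ℝ≥0 → ℝ≥0)
    (σ : Fin N → ℝ≥0) (ρω ρu : Fin N → ℝ≥0 → ℝ≥0) (ε : Fin N → ℝ≥0)
    (ψ ψinv : Fin N → ℝ≥0 → ℝ≥0) (σt : ℝ≥0)
    -- `α i` is class K∞ with inverse `αinv i`
    (hα_cont : ∀ i, Continuous (α i)) (hα_mono : ∀ i, StrictMono (α i))
    (hα_zero : ∀ i, α i 0 = 0) (hα_top : ∀ i, Tendsto (α i) atTop atTop)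
    (hαinv_left : ∀ i, Function.LeftInverse (αinv i) (α i))
    (hαinv_right : ∀ i, Function.RightInverse (αinv i) (α i))
    -- `ψ i` is class K∞ with inverse `ψinv i`
    (hψ_cont : ∀ i, Continuous (ψ i)) (hψ_mono : ∀ i, StrictMono (ψ i))
    (hψ_zero : ∀ i, ψ i 0 = 0) (hψ_top : ∀ i, Tendsto (ψ i) atTop atTop)
    (hψinv_left : ∀ i, Function.LeftInverse (ψinv i) (ψ i))
    (hψinv_right : ∀ i, Function.RightInverse (ψinv i) (ψ i))
    -- constants and gain functions
    (hσ : ∀ i, 0 < σ i ∧ σ i < 1)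
    (hρω_mono : ∀ i, Monotone (ρω i)) (hρω_zero : ∀ i, ρω i 0 = 0)
    (hρu_mono : ∀ i, Monotone (ρu i))
    -- (a) local alternating simulation function, condition (1)
    (hS1 : ∀ (i : Fin N) (x : X i) (xh : Xh i),
      α i (⨆ j, ‖H i j x - Hh i j xh‖₊) ≤ S i x xh)
    -- (a) local alternating simulation function, condition (2), max form
    (hS2 : ∀ (i : Fin N) (x : X i) (xh : Xh i) (uh : Uh i), ∃ u : U i,
      ∀ (ω ωh : (j : {j : Fin N // j ≠ i}) → (Fin (p j.1 i) → ℝ)),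
        ∀ x' ∈ F i x ω u, ∃ xh' ∈ Fh i xh ωh uh,
          S i x' xh' ≤ max (max (σ i * S i x xh) (ρω i ‖ω - ωh‖₊))
            (max (ρu i ‖uh‖₊) (ε i)))
    -- (b) scaled small-gain condition with γ_{ii} = σ_i·id and γ_{ij} = ρ_{ω_i} ∘ α_j⁻¹
    (hσt : 0 < σt ∧ σt < 1)
    (hsg : ∀ (i j : Fin N) (r : ℝ≥0),
      ψinv i (if i = j then σ i * ψ j r else ρω i (αinv j (ψ j r))) ≤ σt * r) :
    -- condition (1) of the composed alternating simulation function
    (∀ (x : ∀ i, X i) (xh : ∀ i, Xh i),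
      (⨅ j, ψinv j (α j (⨆ i, ‖H i i (x i) - Hh i i (xh i)‖₊)))
        ≤ ⨆ i, ψinv i (S i (x i) (xh i)))
    ∧
    -- condition (2) of the composed alternating simulation function, with exact
    -- interconnection ω_{ij} = H_{ji}(x_j) and ω̂_{ij} = Ĥ_{ji}(x̂_j)
    (∀ (x : ∀ i, X i) (xh : ∀ i, Xh i) (uh : ∀ i, Uh i), ∃ u : ∀ i, U i,
      ∀ x' : ∀ i, X i,
        (∀ i, x' i ∈ F i (x i) (fun j => H j.1 i (x j.1)) (u i)) →
        ∃ xh' : ∀ i, Xh i,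
          (∀ i, xh' i ∈ Fh i (xh i) (fun j => Hh j.1 i (xh j.1)) (uh i)) ∧
          (⨆ i, ψinv i (S i (x' i) (xh' i)))
            ≤ max (σt * ⨆ i, ψinv i (S i (x i) (xh i)))
                (max (⨆ i, ψinv i (ρu i ‖uh i‖₊)) (⨆ i, ψinv i (ε i)))) := by
  have : Nonempty (Fin N) := ⟨⟨0, hN⟩⟩
  exact stmt8_general H Hh F Fh S
    (fun i => (hα_mono i).orderIsoOfRightInverse (α i) (αinv i) (hαinv_right i))
    (fun i => (hψ_mono i).orderIsoOfRightInverse (ψ i) (ψinv i) (hψinv_right i))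
    σ ρω ρu ε (σt * ·) hρω_mono hρω_zero hS1 hS2 hsg
end

section
/- Let κ_c > 0, τ > 0, κ_d ≥ 1, ε ∈ (0,1) be real numbers, z̲, z̄ natural numbers with 1 ≤ z̲ ≤ z̄, and let V, V⁺, μ ≥ 0 be reals. (Flow step) If c is a natural number with 0 ≤ c ≤ z̄ − 1 and V⁺ ≤ e^{−κ_c τ}·V + μ, then V⁺·e^{κ_c τ ε (c+1)} ≤ e^{−κ_c τ (1−ε)}·( V·e^{κ_c τ ε c} ) + e^{κ_c τ ε (z̄+1)}·μ, and e^{−κ_c τ (1−ε)} < 1. (Jump step) If c is a natural number with z̲ ≤ c ≤ z̄ and V⁺ ≤ κ_d·V + μ, then V⁺ ≤ ( κ_d·e^{−κ_c τ ε z̲} )·( V·e^{κ_c τ ε c} ) + μ. -/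
/-!
Each unit of the counter raises the weight `e^{r c}` by a factor `e^r`. During a flow period the
decay `e^{-a}` of `V` pays for this increment and leaves the net rate `a - r = κ_c τ (1 - ε)`.
At a jump the accumulated weight is released: resetting the counter from `c ≥ z̲` to `0` yields a
factor of at most `e^{-r z̲}`, which counteracts the jump gain `κ_d`.
-/

/-- The candidate alternating simulation function `𝒱 = V e^{r c}`, as a function of the value `V` of
the original function and of the counter `c`. The rate is `r = κ_c τ ε` in the paper, and the
counter is allowed to be real. -/
noncomputable def counterWeighted (r V c : ℝ) : ℝ :=
  V * Real.exp (r * c)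

section CounterWeighted

variable {a r κ V Vp μ c z : ℝ}

theorem counterWeighted_zero (r V : ℝ) : counterWeighted r V 0 = V := by
  simp [counterWeighted]

theorem counterWeighted_add_counter (r V c d : ℝ) :
    counterWeighted r V (c + d) = Real.exp (r * d) * counterWeighted r V c := by
  simp only [counterWeighted, mul_add, Real.exp_add]
  ring

theorem counterWeighted_le_of_value_le (r c : ℝ) (h : V ≤ Vp) :
    counterWeighted r V c ≤ counterWeighted r Vp c :=
  mul_le_mul_of_nonneg_right h (Real.exp_nonneg _)

theorem counterWeighted_le_of_counter_le {d : ℝ} (hr : 0 ≤ r) (hV : 0 ≤ V) (h : c ≤ d) :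
    counterWeighted r V c ≤ counterWeighted r V d := by
  unfold counterWeighted
  gcongr

theorem exp_neg_mul_counterWeighted_add_one (a r V c : ℝ) :
    Real.exp (-a) * counterWeighted r V (c + 1) =
      Real.exp (-(a - r)) * counterWeighted r V c := by
  rw [counterWeighted_add_counter, ← mul_assoc, ← Real.exp_add]
  ring_nf

theorem le_exp_neg_mul_counterWeighted (hr : 0 ≤ r) (hV : 0 ≤ V) (hzc : z ≤ c) :
    V ≤ Real.exp (-(r * z)) * counterWeighted r V c :=
  calc V = counterWeighted r V 0 := (counterWeighted_zero r V).symm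
    _ ≤ counterWeighted r V (c + -z) :=
      counterWeighted_le_of_counter_le hr hV (by linarith)
    _ = Real.exp (-(r * z)) * counterWeighted r V c := by
      rw [counterWeighted_add_counter, mul_neg]

theorem counterWeighted_flow_le (hr : 0 ≤ r) (hμ : 0 ≤ μ) (hcz : c ≤ z)
    (hflow : Vp ≤ Real.exp (-a) * V + μ) :
    counterWeighted r Vp (c + 1) ≤
      Real.exp (-(a - r)) * counterWeighted r V c + Real.exp (r * (z + 1)) * μ :=
  calc counterWeighted r Vp (c + 1)
      ≤ counterWeighted r (Real.exp (-a) * V + μ) (c + 1) :=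
        counterWeighted_le_of_value_le r (c + 1) hflow
    _ = Real.exp (-a) * counterWeighted r V (c + 1) + Real.exp (r * (c + 1)) * μ := by
        unfold counterWeighted
        ring
    _ = Real.exp (-(a - r)) * counterWeighted r V c + Real.exp (r * (c + 1)) * μ := by
        rw [exp_neg_mul_counterWeighted_add_one]
    _ ≤ Real.exp (-(a - r)) * counterWeighted r V c + Real.exp (r * (z + 1)) * μ := by
        gcongr

theorem counterWeighted_jump_le (hr : 0 ≤ r) (hκ : 0 ≤ κ) (hV : 0 ≤ V) (hzc : z ≤ c)
    (hjump : Vp ≤ κ * V + μ) :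
    counterWeighted r Vp 0 ≤ κ * Real.exp (-(r * z)) * counterWeighted r V c + μ :=
  calc counterWeighted r Vp 0 = Vp := counterWeighted_zero r Vp
    _ ≤ κ * V + μ := hjump
    _ ≤ κ * (Real.exp (-(r * z)) * counterWeighted r V c) + μ := by
        gcongr
        exact le_exp_neg_mul_counterWeighted hr hV hzc
    _ = κ * Real.exp (-(r * z)) * counterWeighted r V c + μ := by rw [mul_assoc]

end CounterWeighted

theorem stmt15_general {κc τ κd ε V μ : ℝ} (hκc : 0 < κc) (hτ : 0 < τ) (hκd : 0 ≤ κd)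
    (hε0 : 0 ≤ ε) (hε1 : ε < 1) (hV : 0 ≤ V) (hμ : 0 ≤ μ) (zl zb Vp : ℝ) :
    ((∀ c ≤ zb, Vp ≤ Real.exp (-(κc * τ)) * V + μ →
        counterWeighted (κc * τ * ε) Vp (c + 1) ≤
          Real.exp (-(κc * τ * (1 - ε))) * counterWeighted (κc * τ * ε) V c +
            Real.exp (κc * τ * ε * (zb + 1)) * μ) ∧
      Real.exp (-(κc * τ * (1 - ε))) < 1) ∧
    ∀ c ≥ zl, Vp ≤ κd * V + μ →
      counterWeighted (κc * τ * ε) Vp 0 ≤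
        κd * Real.exp (-(κc * τ * ε * zl)) * counterWeighted (κc * τ * ε) V c + μ := by
  have hrate : 0 ≤ κc * τ * ε := by positivity
  have hnet : 0 < κc * τ * (1 - ε) := mul_pos (mul_pos hκc hτ) (sub_pos.mpr hε1)
  refine ⟨⟨fun c hc hflow => ?_, Real.exp_lt_one_iff.mpr (neg_neg_of_pos hnet)⟩,
    fun c hc hjump => ?_⟩
  · rw [mul_one_sub]
    exact counterWeighted_flow_le hrate hμ hc hflow
  · exact counterWeighted_jump_le hrate hκd hV hc hjump

/-- Sum-form contraction of the counter-weighted function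
`𝒱 = V·e^{κ_c τ ε c}` in the case `κ_d ≥ 1`, `κ_c > 0` of Theorem 2:
flow step (counter `0 ≤ c ≤ z̄-1`) and jump step (counter `z̲ ≤ c ≤ z̄`). -/
theorem stmt15 (κc τ κd ε : ℝ) (zl zb : ℕ)
    (hκc : 0 < κc) (hτ : 0 < τ) (hκd : 1 ≤ κd) (hε : 0 < ε ∧ ε < 1)
    (hzl : 1 ≤ zl) (hzlzb : zl ≤ zb)
    (V Vp μ : ℝ) (hV : 0 ≤ V) (hVp : 0 ≤ Vp) (hμ : 0 ≤ μ) :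
    -- Flow step
    ((∀ c : ℕ, c ≤ zb - 1 → Vp ≤ Real.exp (-(κc * τ)) * V + μ →
        Vp * Real.exp (κc * τ * ε * ((c : ℝ) + 1))
          ≤ Real.exp (-(κc * τ * (1 - ε))) * (V * Real.exp (κc * τ * ε * c))
            + Real.exp (κc * τ * ε * ((zb : ℝ) + 1)) * μ)
      ∧ Real.exp (-(κc * τ * (1 - ε))) < 1)
    ∧
    -- Jump step
    (∀ c : ℕ, zl ≤ c → c ≤ zb → Vp ≤ κd * V + μ →
        Vp ≤ (κd * Real.exp (-(κc * τ * ε * zl))) * (V * Real.exp (κc * τ * ε * c)) + μ) := by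
  obtain ⟨⟨hflow, hrate⟩, hjump⟩ :=
    stmt15_general hκc hτ (zero_le_one.trans hκd) hε.1.le hε.2 hV hμ zl zb Vp
  exact ⟨⟨fun c hc => hflow c (Nat.cast_le.mpr (hc.trans (Nat.sub_le zb 1))), hrate⟩,
    fun c hc _ h => (counterWeighted_zero _ Vp).symm.trans_le (hjump c (Nat.cast_le.mpr hc) h)⟩
end

section
/- Let κ_c ≤ 0, τ > 0, 0 < κ_d < 1 be real numbers, z̄ ≥ 1 a natural number, δ > z̄ a real number, and let V, V⁺, μ ≥ 0 be reals. (Flow step) If c is a natural number with 0 ≤ c ≤ z̄ − 1 and V⁺ ≤ e^{−κ_c τ}·V + μ, then V⁺·κ_d^{(c+1)/δ} ≤ ( e^{−κ_c τ}·κ_d^{1/δ} )·( V·κ_d^{c/δ} ) + μ. (Jump step) If c is a natural number with 0 ≤ c ≤ z̄ and V⁺ ≤ κ_d·V + μ, then V⁺ ≤ κ_d^{(δ−z̄)/δ}·( V·κ_d^{c/δ} ) + μ, and κ_d^{(δ−z̄)/δ} < 1. -/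
/-!
In the weight `κ ^ p` on `V`, with `p = c / δ`, a flow period raises the exponent by `s = 1 / δ`;
the new weight is at most `1`, so it does not enlarge the perturbation `μ`. At a jump the weight is
reset to `1`, and the factor `κ` has to pay for it: `κ ≤ κ ^ q * κ ^ p` as long as `q + p ≤ 1`,
and `q = (δ - z̄) / δ` satisfies this for every counter `c ≤ z̄`.
-/

section WeightedContraction

variable {κ a p q s V V' μ : ℝ}

theorem mul_rpow_add_le_of_le_mul_add (hκ₀ : 0 < κ) (hκ₁ : κ ≤ 1) (hps : 0 ≤ p + s)
    (hμ : 0 ≤ μ) (h : V' ≤ a * V + μ) :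
    V' * κ ^ (p + s) ≤ a * κ ^ s * (V * κ ^ p) + μ := by
  have weight_le_one : κ ^ (p + s) ≤ 1 := Real.rpow_le_one hκ₀.le hκ₁ hps
  calc V' * κ ^ (p + s)
      ≤ (a * V + μ) * κ ^ (p + s) := by gcongr
    _ = a * V * κ ^ (p + s) + μ * κ ^ (p + s) := add_mul _ _ _
    _ ≤ a * V * κ ^ (p + s) + μ := by gcongr; exact mul_le_of_le_one_right hμ weight_le_one
    _ = a * κ ^ s * (V * κ ^ p) + μ := by rw [Real.rpow_add hκ₀]; ring

theorem le_rpow_mul_mul_rpow_add_of_le_mul_add (hκ₀ : 0 < κ) (hκ₁ : κ ≤ 1) (hqp : q + p ≤ 1)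
    (hV : 0 ≤ V) (h : V' ≤ κ * V + μ) :
    V' ≤ κ ^ q * (V * κ ^ p) + μ :=
  calc V' ≤ κ * V + μ := h
    _ ≤ κ ^ (q + p) * V + μ := by gcongr; exact Real.self_le_rpow_of_le_one hκ₀.le hκ₁ hqp
    _ = κ ^ q * (V * κ ^ p) + μ := by rw [Real.rpow_add hκ₀]; ring

end WeightedContraction

theorem stmt16_general {κd δ zb a V Vp μ : ℝ} (hκd₀ : 0 < κd) (hκd₁ : κd < 1)
    (hδ₀ : 0 < δ) (hδ : zb < δ) (hV : 0 ≤ V) (hμ : 0 ≤ μ) :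
    (∀ c : ℝ, 0 ≤ c → Vp ≤ a * V + μ →
        Vp * κd ^ ((c + 1) / δ) ≤ a * κd ^ (1 / δ) * (V * κd ^ (c / δ)) + μ)
    ∧
    ((∀ c : ℝ, c ≤ zb → Vp ≤ κd * V + μ →
        Vp ≤ κd ^ ((δ - zb) / δ) * (V * κd ^ (c / δ)) + μ)
      ∧ κd ^ ((δ - zb) / δ) < 1) := by
  refine ⟨fun c hc flow => ?_, fun c hc jump => ?_, ?_⟩
  · rw [add_div]
    exact mul_rpow_add_le_of_le_mul_add hκd₀ hκd₁.le (by positivity) hμ flow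
  · have exponents_le_one : (δ - zb) / δ + c / δ ≤ 1 := by
      rw [← add_div, div_le_one hδ₀]
      linarith
    exact le_rpow_mul_mul_rpow_add_of_le_mul_add hκd₀ hκd₁.le exponents_le_one hV jump
  · exact Real.rpow_lt_one hκd₀.le hκd₁ (div_pos (sub_pos.mpr hδ) hδ₀)

/-- Sum-form contraction of the counter-weighted function `𝒱 = V·κ_d^{c/δ}` in the
case `κ_d < 1`, `κ_c ≤ 0` of Theorem 2: flow step (counter `0 ≤ c ≤ z̄-1`) and jump
step (counter `0 ≤ c ≤ z̄`), with contraction factor `κ_d^{(δ-z̄)/δ} < 1` at jumps. -/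
theorem stmt16 (κc τ κd : ℝ) (zb : ℕ) (δ : ℝ)
    (hκc : κc ≤ 0) (hτ : 0 < τ) (hκd : 0 < κd ∧ κd < 1)
    (hzb : 1 ≤ zb) (hδ : (zb : ℝ) < δ)
    (V Vp μ : ℝ) (hV : 0 ≤ V) (hVp : 0 ≤ Vp) (hμ : 0 ≤ μ) :
    -- Flow step
    (∀ c : ℕ, c ≤ zb - 1 → Vp ≤ Real.exp (-(κc * τ)) * V + μ →
        Vp * κd ^ (((c : ℝ) + 1) / δ)
          ≤ (Real.exp (-(κc * τ)) * κd ^ (1 / δ)) * (V * κd ^ ((c : ℝ) / δ)) + μ)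
    ∧
    -- Jump step
    ((∀ c : ℕ, c ≤ zb → Vp ≤ κd * V + μ →
        Vp ≤ κd ^ ((δ - (zb : ℝ)) / δ) * (V * κd ^ ((c : ℝ) / δ)) + μ)
      ∧ κd ^ ((δ - (zb : ℝ)) / δ) < 1) := by
  obtain ⟨flow, jump, factor_lt_one⟩ :=
    stmt16_general hκd.1 hκd.2 (zb.cast_nonneg.trans_lt hδ) hδ hV hμ
  exact ⟨fun c _ => flow c c.cast_nonneg, fun c hc => jump c (Nat.cast_le.mpr hc), factor_lt_one⟩
end
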